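/- In the extended Z₃-graded quantum Weyl superalgebra W̃, define T_x = q(x·∂x + θ·∂θ), T_y = q² x·∂y, and T_θ = q² x⁻¹·∂θ. Then these operators form a Z₃-graded quantum Lie superalgebra with q-deformed brackets [A,B]_q = AB − qBA: T_x T_y − q T_y T_x = q T_y, T_x T_θ − q T_θ T_x = q T_θ, T_y T_θ − q T_θ T_y = 0, and moreover (T_y)³ = 0 and (T_θ)³ = 0. -/

import Mathlib

/-!
`W̃`: the extended Z₃-graded quantum Weyl superalgebra, the unital associative
ℂ-algebra with generators `x`, `x⁻¹`, `y`, `θ`, `∂x`, `∂y`, `∂θ`, quotient of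
the free algebra by the two-sided ideal generated by the relations
`x·x⁻¹ = 1 = x⁻¹·x`;  `xy = q·yx`, `xθ = q·θx`, `yθ = q²·θy`, `y³ = 0`, `θ³ = 0`;
`∂x·x = 1 + q·x·∂x + (q−1)·θ·∂θ`, `∂x·y = q²·y·∂x`, `∂x·θ = θ·∂x`,
`∂y·x = q²·x·∂y`, `∂y·θ = q²·θ·∂y`, `∂y·y = 1 + q·y·∂y + (q−1)(x·∂x + θ·∂θ)`,
`∂θ·x = q·x·∂θ`, `∂θ·y = q²·y·∂θ`, `∂θ·θ = 1 + q·θ·∂θ`;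
`∂x·∂y = q²·∂y·∂x`, `∂y·∂θ = q·∂θ·∂y`, `∂θ·∂x = ∂x·∂θ`, `(∂θ)³ = 0`, `(∂y)³ = 0`.
-/

noncomputable section

inductive Gen : Type
  | x | xinv | y | th | px | py | pth

abbrev FA : Type := FreeAlgebra ℂ Gen

def Xf : FA := FreeAlgebra.ι ℂ Gen.x
def XIf : FA := FreeAlgebra.ι ℂ Gen.xinv
def Yf : FA := FreeAlgebra.ι ℂ Gen.y
def Tf : FA := FreeAlgebra.ι ℂ Gen.th
def PXf : FA := FreeAlgebra.ι ℂ Gen.px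
def PYf : FA := FreeAlgebra.ι ℂ Gen.py
def PTf : FA := FreeAlgebra.ι ℂ Gen.pth

/-- The defining relations of the extended Z₃-graded quantum Weyl superalgebra. -/
inductive QRel (q : ℂ) : FA → FA → Prop
  | xxi : QRel q (Xf * XIf) 1
  | xix : QRel q (XIf * Xf) 1
  | xy : QRel q (Xf * Yf) (q • (Yf * Xf))
  | xth : QRel q (Xf * Tf) (q • (Tf * Xf))
  | yth : QRel q (Yf * Tf) ((q ^ 2) • (Tf * Yf))
  | ycube : QRel q (Yf ^ 3) 0
  | thcube : QRel q (Tf ^ 3) 0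
  | pxx : QRel q (PXf * Xf) (1 + q • (Xf * PXf) + (q - 1) • (Tf * PTf))
  | pxy : QRel q (PXf * Yf) ((q ^ 2) • (Yf * PXf))
  | pxth : QRel q (PXf * Tf) (Tf * PXf)
  | pyx : QRel q (PYf * Xf) ((q ^ 2) • (Xf * PYf))
  | pyth : QRel q (PYf * Tf) ((q ^ 2) • (Tf * PYf))
  | pyy : QRel q (PYf * Yf) (1 + q • (Yf * PYf) + (q - 1) • (Xf * PXf + Tf * PTf))
  | pthx : QRel q (PTf * Xf) (q • (Xf * PTf))
  | pthy : QRel q (PTf * Yf) ((q ^ 2) • (Yf * PTf))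
  | pthth : QRel q (PTf * Tf) (1 + q • (Tf * PTf))
  | pxpy : QRel q (PXf * PYf) ((q ^ 2) • (PYf * PXf))
  | pypth : QRel q (PYf * PTf) (q • (PTf * PYf))
  | pthpx : QRel q (PTf * PXf) (PXf * PTf)
  | pthcube : QRel q (PTf ^ 3) 0
  | pycube : QRel q (PYf ^ 3) 0

/-- The extended Z₃-graded quantum Weyl superalgebra `W̃`. -/
abbrev Wtl (q : ℂ) : Type := RingQuot (QRel q)

def Xg (q : ℂ) : Wtl q := RingQuot.mkAlgHom ℂ (QRel q) Xf
def XIg (q : ℂ) : Wtl q := RingQuot.mkAlgHom ℂ (QRel q) XIf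
def Yg (q : ℂ) : Wtl q := RingQuot.mkAlgHom ℂ (QRel q) Yf
def Tg (q : ℂ) : Wtl q := RingQuot.mkAlgHom ℂ (QRel q) Tf
def PXg (q : ℂ) : Wtl q := RingQuot.mkAlgHom ℂ (QRel q) PXf
def PYg (q : ℂ) : Wtl q := RingQuot.mkAlgHom ℂ (QRel q) PYf
def PTg (q : ℂ) : Wtl q := RingQuot.mkAlgHom ℂ (QRel q) PTf

section QuantumPlane

variable {A : Type*} [Ring A] [Algebra ℂ A] {q : ℂ}

/-- Commutation with an element up to a cube root of unity passes to the inverse. -/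
theorem mul_inv_of_qCommute (hq3 : q ^ 3 = 1) {x xi p : A} (hxxi : x * xi = 1)
    (hxix : xi * x = 1) (h : p * x = (q ^ 2) • (x * p)) : p * xi = q • (xi * p) := by
  have h' : xi * p = (q ^ 2) • (p * xi) := by
    calc xi * p = xi * (p * x) * xi := by rw [mul_assoc, mul_assoc, hxxi, mul_one]
      _ = (q ^ 2) • ((xi * x) * p * xi) := by
        rw [h]; simp only [mul_smul_comm, smul_mul_assoc, mul_assoc]
      _ = (q ^ 2) • (p * xi) := by rw [hxix, one_mul]
  rw [h', smul_smul, ← pow_succ', hq3, one_smul]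

/-- If `b * a` is a scalar multiple of `a * b` and `b ^ 3 = 0`, then `(a * b) ^ 3 = 0`. -/
theorem mul_pow_three_eq_zero_of_qCommute {c : ℂ} {a b : A} (h : b * a = c • (a * b))
    (hb : b ^ 3 = 0) : (a * b) ^ 3 = 0 := by
  have h2 (z : A) : b * (a * z) = c • (a * (b * z)) := by
    rw [← mul_assoc, h, smul_mul_assoc, mul_assoc]
  have hb' : b * (b * b) = 0 := by rw [← hb, pow_three]
  simp only [pow_three, mul_assoc, h2, mul_smul_comm, hb', mul_zero, smul_zero]

/-- The Euler operator `x * px + t * pt` acts on `x` as a `q`-derivation. -/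
theorem euler_mul_coord {x t px pt : A} (hxt : x * t = q • (t * x))
    (hpxx : px * x = 1 + q • (x * px) + (q - 1) • (t * pt))
    (hptx : pt * x = q • (x * pt)) :
    (x * px + t * pt) * x = x + q • (x * (x * px + t * pt)) := by
  have hxt' : x * (t * pt) = q • (t * (x * pt)) := by
    rw [← mul_assoc, hxt, smul_mul_assoc, mul_assoc]
  simp only [add_mul, mul_assoc, hpxx, hptx, mul_add, mul_one, mul_smul_comm, hxt']
  module

/-- The Euler operator `x * px + t * pt` commutes with `py`. -/
theorem euler_commute_deriv (hq3 : q ^ 3 = 1) {x t px py pt : A}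
    (hpyx : py * x = (q ^ 2) • (x * py)) (hpyt : py * t = (q ^ 2) • (t * py))
    (hpxpy : px * py = (q ^ 2) • (py * px)) (hpypt : py * pt = q • (pt * py)) :
    Commute (x * px + t * pt) py := by
  have hx : py * (x * px) = x * (px * py) := by
    rw [← mul_assoc, hpyx, smul_mul_assoc, mul_assoc, hpxpy, mul_smul_comm]
  have ht : py * (t * pt) = t * (pt * py) := by
    rw [← mul_assoc, hpyt, smul_mul_assoc, mul_assoc, hpypt, mul_smul_comm, smul_smul,
      ← pow_succ, hq3, one_smul]
  rw [Commute, SemiconjBy, mul_add, add_mul, hx, ht, mul_assoc, mul_assoc]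

/-- A `q`-derivation rule for `x` determines the one for its inverse. -/
theorem mul_inv_of_qDerivation {x xi e : A} (hxxi : x * xi = 1) (hxix : xi * x = 1)
    (h : e * x = x + q • (x * e)) : xi * e = xi + q • (e * xi) := by
  calc xi * e = xi * (e * x) * xi := by rw [mul_assoc, mul_assoc, hxxi, mul_one]
    _ = (xi * x) * xi + q • ((xi * x) * e * xi) := by
      rw [h]; simp only [mul_add, add_mul, mul_smul_comm, smul_mul_assoc, mul_assoc]
    _ = xi + q • (e * xi) := by rw [hxix, one_mul, one_mul]

/-- The commutation rule between `pt` and the Euler operator `x * px + t * pt`. -/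
theorem deriv_mul_euler {x t px pt : A} (hptx : pt * x = q • (x * pt))
    (hptt : pt * t = 1 + q • (t * pt)) (hptpx : pt * px = px * pt) :
    pt * (x * px + t * pt) = pt + q • ((x * px + t * pt) * pt) := by
  rw [mul_add, ← mul_assoc, ← mul_assoc, hptx, hptt]
  simp only [add_mul, one_mul, smul_mul_assoc, mul_assoc, hptpx, smul_add]
  abel

/-- If `a` and `b` satisfy the `q`-derivation rule with `e` on the right, then `a * b` satisfies it
with `e` on the left. -/
theorem qBracket_mul_of_qDerivation (hq3 : q ^ 3 = 1) (hq1 : q ≠ 1) {a b e : A}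
    (ha : a * e = a + q • (e * a)) (hb : b * e = b + q • (e * b)) :
    e * (a * b) = a * b + q • (a * b * e) := by
  have hq : q ^ 2 + q + 1 = 0 := by
    refine (mul_eq_zero.mp ?_).resolve_left (sub_ne_zero.mpr hq1)
    linear_combination hq3
  have h : a * b * e = a * b + q • (a * b) + q ^ 2 • (e * (a * b)) := by
    rw [mul_assoc, hb, mul_add, mul_smul_comm, ← mul_assoc, ha, add_mul, smul_mul_assoc,
      mul_assoc]
    module
  rw [h]
  match_scalars
  · linear_combination -hq3
  · linear_combination -hq

end QuantumPlane

/-- The operators `T_x = q(x·∂x + θ·∂θ)`, `T_y = q²·x·∂y`, `T_θ = q²·x⁻¹·∂θ`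
form a Z₃-graded quantum Lie superalgebra with the q-deformed brackets
`[A,B]_q = AB − qBA`:  `[T_x,T_y]_q = qT_y`, `[T_x,T_θ]_q = qT_θ`,
`[T_y,T_θ]_q = 0`, and `(T_y)³ = 0 = (T_θ)³`. -/
theorem z3_graded_lie_superalgebra (q : ℂ) (hq3 : q ^ 3 = 1) (hq1 : q ≠ 1)
    (Tx Ty Tth : Wtl q)
    (hTx : Tx = q • (Xg q * PXg q + Tg q * PTg q))
    (hTy : Ty = (q ^ 2) • (Xg q * PYg q))
    (hTth : Tth = (q ^ 2) • (XIg q * PTg q)) :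
    Tx * Ty - q • (Ty * Tx) = q • Ty ∧
    Tx * Tth - q • (Tth * Tx) = q • Tth ∧
    Ty * Tth - q • (Tth * Ty) = 0 ∧
    Ty ^ 3 = 0 ∧
    Tth ^ 3 = 0 := by
  have hxxi : Xg q * XIg q = 1 := by
    simpa [Xg, XIg, Tg, PXg, PYg, PTg] using RingQuot.mkAlgHom_rel ℂ (QRel.xxi (q := q))
  have hxix : XIg q * Xg q = 1 := by
    simpa [Xg, XIg, Tg, PXg, PYg, PTg] using RingQuot.mkAlgHom_rel ℂ (QRel.xix (q := q))
  have hxt : Xg q * Tg q = q • (Tg q * Xg q) := by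
    simpa [Xg, XIg, Tg, PXg, PYg, PTg] using RingQuot.mkAlgHom_rel ℂ (QRel.xth (q := q))
  have hpxx : PXg q * Xg q = 1 + q • (Xg q * PXg q) + (q - 1) • (Tg q * PTg q) := by
    simpa [Xg, XIg, Tg, PXg, PYg, PTg] using RingQuot.mkAlgHom_rel ℂ (QRel.pxx (q := q))
  have hpyx : PYg q * Xg q = (q ^ 2) • (Xg q * PYg q) := by
    simpa [Xg, XIg, Tg, PXg, PYg, PTg] using RingQuot.mkAlgHom_rel ℂ (QRel.pyx (q := q))
  have hpyt : PYg q * Tg q = (q ^ 2) • (Tg q * PYg q) := by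
    simpa [Xg, XIg, Tg, PXg, PYg, PTg] using RingQuot.mkAlgHom_rel ℂ (QRel.pyth (q := q))
  have hptx : PTg q * Xg q = q • (Xg q * PTg q) := by
    simpa [Xg, XIg, Tg, PXg, PYg, PTg] using RingQuot.mkAlgHom_rel ℂ (QRel.pthx (q := q))
  have hptt : PTg q * Tg q = 1 + q • (Tg q * PTg q) := by
    simpa [Xg, XIg, Tg, PXg, PYg, PTg] using RingQuot.mkAlgHom_rel ℂ (QRel.pthth (q := q))
  have hpxpy : PXg q * PYg q = (q ^ 2) • (PYg q * PXg q) := by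
    simpa [Xg, XIg, Tg, PXg, PYg, PTg] using RingQuot.mkAlgHom_rel ℂ (QRel.pxpy (q := q))
  have hpypt : PYg q * PTg q = q • (PTg q * PYg q) := by
    simpa [Xg, XIg, Tg, PXg, PYg, PTg] using RingQuot.mkAlgHom_rel ℂ (QRel.pypth (q := q))
  have hptpx : PTg q * PXg q = PXg q * PTg q := by
    simpa [Xg, XIg, Tg, PXg, PYg, PTg] using RingQuot.mkAlgHom_rel ℂ (QRel.pthpx (q := q))
  have hpt3 : PTg q ^ 3 = 0 := by
    simpa [Xg, XIg, Tg, PXg, PYg, PTg] using RingQuot.mkAlgHom_rel ℂ (QRel.pthcube (q := q))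
  have hpy3 : PYg q ^ 3 = 0 := by
    simpa [Xg, XIg, Tg, PXg, PYg, PTg] using RingQuot.mkAlgHom_rel ℂ (QRel.pycube (q := q))
  have hptxi : PTg q * XIg q = (q ^ 2) • (XIg q * PTg q) := by
    have h : PTg q * Xg q = ((q ^ 2) ^ 2) • (Xg q * PTg q) := by
      rw [hptx]
      congr 1
      linear_combination -q * hq3
    exact mul_inv_of_qCommute (by linear_combination (q ^ 3 + 1) * hq3) hxxi hxix h
  have hpyxi := mul_inv_of_qCommute hq3 hxxi hxix hpyx
  have hEx := euler_mul_coord hxt hpxx hptx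
  have hEpy := euler_commute_deriv hq3 hpyx hpyt hpxpy hpypt
  have hExi := mul_inv_of_qDerivation hxxi hxix hEx
  have hEpt := deriv_mul_euler hptx hptt hptpx
  have hExipt := qBracket_mul_of_qDerivation hq3 hq1 hExi hEpt
  have hExpy : (Xg q * PXg q + Tg q * PTg q) * (Xg q * PYg q) = Xg q * PYg q +
      q • (Xg q * PYg q * (Xg q * PXg q + Tg q * PTg q)) := by
    rw [← mul_assoc, hEx, add_mul, smul_mul_assoc, mul_assoc, hEpy.eq, ← mul_assoc]
  have hyt : Xg q * PYg q * (XIg q * PTg q) = q • (XIg q * PTg q * (Xg q * PYg q)) := by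
    have hl : Xg q * PYg q * (XIg q * PTg q) = q • (PYg q * PTg q) := by
      rw [mul_assoc, ← mul_assoc (PYg q), hpyxi, smul_mul_assoc, mul_smul_comm, mul_assoc,
        ← mul_assoc (Xg q), hxxi, one_mul]
    have hr : XIg q * PTg q * (Xg q * PYg q) = q • (PTg q * PYg q) := by
      rw [mul_assoc, ← mul_assoc (PTg q), hptx, smul_mul_assoc, mul_smul_comm, mul_assoc,
        ← mul_assoc (XIg q), hxix, one_mul]
    rw [hl, hr, hpypt]
  subst hTx hTy hTth
  refine ⟨?_, ?_, ?_, ?_, ?_⟩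
  · rw [smul_mul_smul_comm, smul_mul_smul_comm, hExpy]
    module
  · rw [smul_mul_smul_comm, smul_mul_smul_comm, hExipt]
    module
  · rw [smul_mul_smul_comm, smul_mul_smul_comm, hyt]
    module
  · rw [smul_pow, mul_pow_three_eq_zero_of_qCommute hpyx hpy3, smul_zero]
  · rw [smul_pow, mul_pow_three_eq_zero_of_qCommute hptxi hpt3, smul_zero]
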